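/- For any ideals I, J, L of A = K[x₁,…,xₙ] with I proper, β(β(I, J), L) = β(β(I, L), J). -/

import Mathlib

open scoped Classical

noncomputable section

/-- A semigroup order on monomials: a strict total order on exponent vectors (written
additively; the monomial `1` corresponds to `0`) compatible with multiplication. -/
def IsSemigroupOrder {σ : Type*} (lt : (σ →₀ ℕ) → (σ →₀ ℕ) → Prop) : Prop :=
  IsStrictTotalOrder (σ →₀ ℕ) lt ∧ ∀ a b c : σ →₀ ℕ, lt a b → lt (c + a) (c + b)

/-- The variable `i` is local for the order `lt`, i.e. `x_i < 1`. -/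
def IsLocalVar {σ : Type*} (lt : (σ →₀ ℕ) → (σ →₀ ℕ) → Prop) (i : σ) : Prop :=
  lt (Finsupp.single i 1) 0

/-- A control order: a semigroup order under which every monomial divisible by a local
variable is `< 1`. -/
def IsControlOrder {σ : Type*} (lt : (σ →₀ ℕ) → (σ →₀ ℕ) → Prop) : Prop :=
  IsSemigroupOrder lt ∧ ∀ m : σ →₀ ℕ, (∃ i, IsLocalVar lt i ∧ m i ≠ 0) → lt m 0

/-- `m` is the leading monomial of `g` w.r.t. `lt`. -/
def IsLeadingMonomial {K : Type*} [CommSemiring K] {σ : Type*}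
    (lt : (σ →₀ ℕ) → (σ →₀ ℕ) → Prop) (g : MvPolynomial σ K) (m : σ →₀ ℕ) : Prop :=
  m ∈ g.support ∧ ∀ m' ∈ g.support, m' ≠ m → lt m' m

/-- The multiplicative set `S = {1 + g : g = 0 or lt(g) < 1}`. -/
def SDen (K : Type*) [CommSemiring K] {σ : Type*}
    (lt : (σ →₀ ℕ) → (σ →₀ ℕ) → Prop) : Set (MvPolynomial σ K) :=
  {f | ∃ g : MvPolynomial σ K, f = 1 + g ∧
    (g = 0 ∨ ∃ m, IsLeadingMonomial lt g m ∧ lt m 0)}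

/-- `I = ⋂ i ∈ s, Q i` is a minimal primary decomposition: every `Q i` is primary, the
radicals are pairwise distinct, and no component contains the intersection of the others. -/
def MinPrimDecOn {R : Type*} [CommRing R] {ι : Type*} (I : Ideal R) (Q : ι → Ideal R)
    (s : Finset ι) : Prop :=
  I = ⨅ i ∈ s, Q i ∧ (∀ i ∈ s, (Q i).IsPrimary) ∧
    (∀ i ∈ s, ∀ j ∈ s, (Q i).radical = (Q j).radical → i = j) ∧
    ∀ i ∈ s, ¬ (⨅ j ∈ s.erase i, Q j) ≤ Q i

/-- The extraction determined by the decomposition `Q` (over `s`) and the ideal `J`: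
the intersection of those components `Q i` with `Q i + J ≠ A` (which is `⊤` = the whole
ring when there are no such components). -/
def extractionFrom {R : Type*} [CommRing R] {ι : Type*} (J : Ideal R) (Q : ι → Ideal R)
    (s : Finset ι) : Ideal R :=
  ⨅ i ∈ s.filter (fun i => Q i ⊔ J ≠ ⊤), Q i

/-- `B` is the extraction `β(I,J)` of `I` by `J`. -/
def IsExtraction {R : Type*} [CommRing R] (I J B : Ideal R) : Prop :=
  ∃ (k : ℕ) (Q : Fin k → Ideal R), MinPrimDecOn I Q Finset.univ ∧
    B = extractionFrom J Q Finset.univ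

/-- `t ⊆ s` determines an isolated set of primes of the decomposition `Q` over `s`. -/
def IsIsolatedOn {R : Type*} [CommRing R] {ι : Type*} (Q : ι → Ideal R)
    (s t : Finset ι) : Prop :=
  t ⊆ s ∧ ∀ j ∈ s, (∃ i ∈ t, (Q j).radical ≤ (Q i).radical) → j ∈ t

/-- The lifted ideal `W' = ⟨W, t₁ - g₁, …, t_s - g_s⟩ ⊆ A' = K[x₁,…,xₙ,t₁,…,t_s]`. -/
def liftIdeal {K : Type*} [CommRing K] {n s : ℕ} (g : Fin s → MvPolynomial (Fin n) K)
    (W : Ideal (MvPolynomial (Fin n) K)) : Ideal (MvPolynomial (Fin n ⊕ Fin s) K) :=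
  W.map (MvPolynomial.rename (Sum.inl : Fin n → Fin n ⊕ Fin s)).toRingHom ⊔
    Ideal.span (Set.range fun w : Fin s =>
      (MvPolynomial.X (Sum.inr w) : MvPolynomial (Fin n ⊕ Fin s) K) -
        MvPolynomial.rename (Sum.inl : Fin n → Fin n ⊕ Fin s) (g w))

/-- The substitution homomorphism `φ : A' → A`, fixing each `x_i` and sending `t_w ↦ g_w`. -/
def substHom {K : Type*} [CommRing K] {n s : ℕ} (g : Fin s → MvPolynomial (Fin n) K) :
    MvPolynomial (Fin n ⊕ Fin s) K →ₐ[K] MvPolynomial (Fin n) K :=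
  MvPolynomial.aeval (Sum.elim MvPolynomial.X g)

/-!
Passing from `I` to `β(I, J)` is saturating `I` at the multiplicative set `1 + J`, that is,
contracting its extension to `(1 + J)⁻¹A`: saturation commutes with finite intersections, fixes
the primary ideals disjoint from `1 + J`, and sends the others to `A`; and a proper sum `Q + J ≠ A`
means exactly that `Q` is disjoint from `1 + J`. Saturations at two multiplicative sets commute.
-/

section Saturation

variable {R : Type*} [CommRing R] (M N : Submonoid R) {I : Ideal R}

/-- The saturation of `I` at `M`, encoded as the contraction of the extension of `I` to the
localization `M⁻¹R`. Extractions are saturations, by `extractionFrom_eq_idealSaturation`. -/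
def idealSaturation (I : Ideal R) : Ideal R :=
  (I.map (algebraMap R (Localization M))).under R

theorem mem_idealSaturation {f : R} : f ∈ idealSaturation M I ↔ ∃ u ∈ M, u * f ∈ I :=
  IsLocalization.algebraMap_mem_map_algebraMap_iff M (Localization M) I f

theorem idealSaturation_comm (I : Ideal R) :
    idealSaturation N (idealSaturation M I) = idealSaturation M (idealSaturation N I) := by
  ext f
  calc
    f ∈ idealSaturation N (idealSaturation M I) ↔ ∃ v ∈ N, ∃ u ∈ M, u * (v * f) ∈ I := by
      simp only [mem_idealSaturation]
    _ ↔ ∃ u ∈ M, ∃ v ∈ N, v * (u * f) ∈ I :=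
      ⟨fun ⟨v, hv, u, hu, h⟩ => ⟨u, hu, v, hv, mul_left_comm u v f ▸ h⟩,
        fun ⟨u, hu, v, hv, h⟩ => ⟨v, hv, u, hu, mul_left_comm v u f ▸ h⟩⟩
    _ ↔ f ∈ idealSaturation M (idealSaturation N I) := by
      simp only [mem_idealSaturation]

theorem idealSaturation_finset_inf {ι : Type*} (s : Finset ι) (Q : ι → Ideal R) :
    idealSaturation M (s.inf Q) = s.inf fun i => idealSaturation M (Q i) := by
  have map_inf : (s.inf Q).map (algebraMap R (Localization M)) =
      s.inf fun i => (Q i).map (algebraMap R (Localization M)) :=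
    map_finset_inf (IsLocalization.mapFrameHom M (Localization M)) s Q
  rw [idealSaturation, map_inf, Ideal.under, Ideal.comap_finsetInf]
  rfl

variable {M}

theorem idealSaturation_of_isPrimary_of_disjoint (hI : I.IsPrimary)
    (hMI : Disjoint (M : Set R) I) : idealSaturation M I = I :=
  IsLocalization.under_map_of_isPrimary_disjoint M (Localization M) hI hMI

theorem idealSaturation_of_not_disjoint (hMI : ¬ Disjoint (M : Set R) I) :
    idealSaturation M I = ⊤ := by
  have map_eq_top : I.map (algebraMap R (Localization M)) = ⊤ := not_not.1 <|
    mt (IsLocalization.map_algebraMap_ne_top_iff_disjoint M (Localization M) I).1 hMI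
  rw [idealSaturation, map_eq_top, Ideal.under, Ideal.comap_top]

end Saturation

section Extraction

variable {R : Type*} [CommRing R] (I J L : Ideal R)

/-- The multiplicative set `1 + J`, encoded as the elements congruent to `1` modulo `J`. -/
def oneAddSubmonoid : Submonoid R :=
  MonoidHom.mker (Ideal.Quotient.mk J)

variable {J} in
theorem mem_oneAddSubmonoid {u : R} : u ∈ oneAddSubmonoid J ↔ u - 1 ∈ J := by
  rw [oneAddSubmonoid, MonoidHom.mem_mker, ← map_one (Ideal.Quotient.mk J), Ideal.Quotient.eq]

theorem disjoint_oneAddSubmonoid_iff :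
    Disjoint (oneAddSubmonoid J : Set R) I ↔ I ⊔ J ≠ ⊤ := by
  rw [← not_iff_not, not_not, Set.not_disjoint_iff, ← Ideal.isCoprime_iff_sup_eq,
    Ideal.isCoprime_iff_exists]
  constructor
  · rintro ⟨u, hu, huI⟩
    exact ⟨u, huI, -(u - 1), J.neg_mem (mem_oneAddSubmonoid.1 hu), by ring⟩
  · rintro ⟨u, huI, j, hj, hadd⟩
    have sub_eq : u - 1 = -j := by rw [← hadd]; ring
    exact ⟨u, mem_oneAddSubmonoid.2 (sub_eq ▸ J.neg_mem hj), huI⟩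

variable {I} in
theorem idealSaturation_oneAddSubmonoid_of_isPrimary (hI : I.IsPrimary) :
    idealSaturation (oneAddSubmonoid J) I = if I ⊔ J ≠ ⊤ then I else ⊤ := by
  split_ifs with h
  · exact idealSaturation_of_isPrimary_of_disjoint hI ((disjoint_oneAddSubmonoid_iff I J).2 h)
  · exact idealSaturation_of_not_disjoint (mt (disjoint_oneAddSubmonoid_iff I J).1 h)

variable {ι κ₁ κ₂ : Type*}

theorem extractionFrom_eq_idealSaturation {Q : ι → Ideal R} {s : Finset ι}
    (hQ : ∀ i ∈ s, (Q i).IsPrimary) :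
    extractionFrom J Q s = idealSaturation (oneAddSubmonoid J) (⨅ i ∈ s, Q i) :=
  calc
    extractionFrom J Q s = s.inf fun i => if Q i ⊔ J ≠ ⊤ then Q i else ⊤ := by
      rw [extractionFrom, ← Finset.inf_eq_iInf, Finset.inf_ite, Finset.inf_top, inf_top_eq]
    _ = s.inf fun i => idealSaturation (oneAddSubmonoid J) (Q i) :=
      Finset.inf_congr rfl fun i hi =>
        (idealSaturation_oneAddSubmonoid_of_isPrimary J (hQ i hi)).symm
    _ = idealSaturation (oneAddSubmonoid J) (⨅ i ∈ s, Q i) := by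
      rw [← idealSaturation_finset_inf, Finset.inf_eq_iInf]

theorem stmt_18_general {Q : ι → Ideal R} {s : Finset ι} (hQ : ∀ i ∈ s, (Q i).IsPrimary)
    {R₁ : κ₁ → Ideal R} {t₁ : Finset κ₁} (hR₁ : ∀ i ∈ t₁, (R₁ i).IsPrimary)
    (hJ : extractionFrom J Q s = ⨅ i ∈ t₁, R₁ i)
    {R₂ : κ₂ → Ideal R} {t₂ : Finset κ₂} (hR₂ : ∀ i ∈ t₂, (R₂ i).IsPrimary)
    (hL : extractionFrom L Q s = ⨅ i ∈ t₂, R₂ i) :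
    extractionFrom L R₁ t₁ = extractionFrom J R₂ t₂ := by
  rw [extractionFrom_eq_idealSaturation L hR₁, ← hJ, extractionFrom_eq_idealSaturation J hQ,
    extractionFrom_eq_idealSaturation J hR₂, ← hL, extractionFrom_eq_idealSaturation L hQ,
    idealSaturation_comm]

end Extraction

/-- `β(β(I, J), L) = β(β(I, L), J)`. -/
theorem stmt_18 {K : Type*} [Field K] {n : ℕ}
    (I J L : Ideal (MvPolynomial (Fin n) K)) (hI : I ≠ ⊤)
    (k : ℕ) (Q : Fin k → Ideal (MvPolynomial (Fin n) K))
    (hQ : MinPrimDecOn I Q Finset.univ)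
    (l₁ : ℕ) (R₁ : Fin l₁ → Ideal (MvPolynomial (Fin n) K))
    (hR₁ : MinPrimDecOn (extractionFrom J Q Finset.univ) R₁ Finset.univ)
    (l₂ : ℕ) (R₂ : Fin l₂ → Ideal (MvPolynomial (Fin n) K))
    (hR₂ : MinPrimDecOn (extractionFrom L Q Finset.univ) R₂ Finset.univ) :
    extractionFrom L R₁ Finset.univ = extractionFrom J R₂ Finset.univ := by
  exact stmt_18_general J L hQ.2.1 hR₁.2.1 hR₁.1 hR₂.2.1 hR₂.1
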